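/- Let 0<α<1, β:=1/α, and let n≥1 be an integer. For every fixed ρ∈ℝ there exists a unique r=r(ρ)>0 such that n = ∑_{k≥1} k·g(k)/(e^{kr−ρ}+1). Moreover there are constants γ₁,γ₂>0 depending only on β such that γ₁·(−Li_{β+1}(−e^ρ))·r^{−(β+1)} ≤ n ≤ γ₂·(−Li_{β+1}(−e^ρ))·r^{−(β+1)}. -/

import Mathlib

open Real

/-- `g α k` is the number of positive integers `n` with `⌊n^α⌋ = k`. -/
noncomputable def g (α : ℝ) (k : ℕ) : ℕ :=
  Set.ncard {n : ℕ | 1 ≤ n ∧ ⌊(n : ℝ) ^ α⌋ = (k : ℤ)}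

/-- `Li_ν(−x)` via the Fermi–Dirac integral. -/
noncomputable def negLi (ν x : ℝ) : ℝ :=
  -(1 / Real.Gamma ν) * ∫ t in Set.Ioi (0:ℝ), t ^ (ν - 1) / (Real.exp t / x + 1)

/-!
Listing the integers with multiplicity turns the sum into the mean energy
`∑ₙ ⌊n ^ α⌋ / (e ^ (⌊n ^ α⌋ r - ρ) + 1)` of a Fermi gas. Each term is decreasing in `r`, so
existence and uniqueness of `r` reduce to the limits as `r → 0` and `r → ∞`. Since `x / 2 < ⌊x⌋ ≤ x`
for `x ≥ 1`, dropping the floor costs a factor `2` in the weight and in `r`; an integral test for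
`x ^ α` times a decreasing function then compares the energy with
`∫₀^∞ x ^ α / (e ^ (x ^ α r - ρ) + 1) dx`, which the substitution `t = x ^ α r` evaluates to a
multiple of `-Li_{β+1}(-e ^ ρ) r ^ (-(β + 1))`. The boundary cell `[0, 1]` of the integral test
contributes at most `1`, which is absorbed because the energy is at least `1`.
-/

open Set Filter Topology MeasureTheory
open scoped Function

lemma existsUnique_pos_eq_of_strictAntiOn {f : ℝ → ℝ} (hanti : StrictAntiOn f (Ioi 0))
    (hcont : ContinuousOn f (Ioi 0)) (htop : Tendsto f atTop (𝓝 0))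
    (hzero : Tendsto f (𝓝[>] 0) atTop) {y : ℝ} (hy : 0 < y) : ∃! r, 0 < r ∧ y = f r := by
  obtain ⟨r, hr, rfl⟩ := isPreconnected_Ioi.intermediate_value_Ioi
    (le_principal_iff.2 (Ioi_mem_atTop 0)) (le_principal_iff.2 self_mem_nhdsWithin) hcont htop hzero
    (mem_Ioi.2 hy)
  exact ⟨r, ⟨hr, rfl⟩, fun s hs => hanti.injOn hs.1 hr hs.2.symm⟩

section WeightedIntegralTest

lemma intervalIntegrable_of_integrableOn_Ioi {E : Type*} [NormedAddCommGroup E] {f : ℝ → E}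
    {μ : Measure ℝ} {a b c : ℝ} (hf : IntegrableOn f (Ioi c) μ) (hca : c ≤ a) (hab : a ≤ b) :
    IntervalIntegrable f μ a b :=
  (intervalIntegrable_iff_integrableOn_Ioc_of_le hab).2
    (hf.mono_set fun _ hx => hca.trans_lt hx.1)

lemma hasSum_intervalIntegral_nat {E : Type*} [NormedAddCommGroup E] [NormedSpace ℝ E] {f : ℝ → E}
    (hf : IntegrableOn f (Ioi 0)) :
    HasSum (fun n : ℕ => ∫ x in (n : ℝ)..n + 1, f x) (∫ x in Ioi 0, f x) := by
  have hmono : Monotone ((↑) : ℕ → ℝ) := Nat.mono_cast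
  have hcover : ⋃ n : ℕ, Ioc (n : ℝ) ((n : ℝ) + 1) = Ioi 0 := by
    ext x
    simp only [mem_iUnion, mem_Ioc, mem_Ioi]
    refine ⟨fun ⟨n, hn, _⟩ => n.cast_nonneg.trans_lt hn, fun hx => ?_⟩
    obtain ⟨n, hn⟩ := Nat.exists_eq_succ_of_ne_zero (Nat.ceil_pos.2 hx).ne'
    have hceil := (Nat.ceil_eq_iff n.succ_ne_zero).1 hn
    exact ⟨n, by simpa using hceil⟩
  have hdisj : Pairwise (Disjoint on fun n : ℕ => Ioc (n : ℝ) ((n : ℝ) + 1)) := by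
    simpa only [Nat.succ_eq_succ, Nat.succ_eq_add_one, Nat.cast_add_one] using
      hmono.pairwise_disjoint_on_Ioc_succ
  simp_rw [intervalIntegral.integral_of_le (le_add_of_nonneg_right zero_le_one)]
  rw [← hcover] at hf ⊢
  exact hasSum_integral_iUnion (fun _ => measurableSet_Ioc) hdisj hf

lemma mul_rpow_le_integral_rpow {a x y : ℝ} (ha : 0 ≤ a) (hx : 0 ≤ x) (hxy : x ≤ y) :
    (y - x) * y ^ a ≤ (a + 1) * ∫ t in x..y, t ^ a := by
  have hx' : x ^ (a + 1) ≤ x * y ^ a := by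
    rw [rpow_add_one' hx (by positivity), mul_comm]
    gcongr
  rw [integral_rpow (Or.inl (by linarith)), mul_div_cancel₀ _ (by positivity),
    rpow_add_one' (hx.trans hxy) (by positivity)]
  linarith

variable {a C : ℝ} {w : ℝ → ℝ}

lemma rpow_mul_le_integral_cell (ha : 0 ≤ a) (hanti : AntitoneOn w (Ioi 0))
    (hnonneg : ∀ x > 0, 0 ≤ w x) (hint : IntegrableOn (fun x => x ^ a * w x) (Ioi 0)) (n : ℕ) :
    ((n : ℝ) + 1) ^ a * w (n + 1) ≤ (a + 1) * ∫ x in (n : ℝ)..n + 1, x ^ a * w x := by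
  have hn : (0 : ℝ) ≤ n := n.cast_nonneg
  have hcell := intervalIntegrable_of_integrableOn_Ioi hint hn (le_add_of_nonneg_right zero_le_one)
  calc ((n : ℝ) + 1) ^ a * w (n + 1)
      = (n + 1 - n) * ((n : ℝ) + 1) ^ a * w (n + 1) := by ring
    _ ≤ (a + 1) * (∫ x in (n : ℝ)..n + 1, x ^ a) * w (n + 1) :=
        mul_le_mul_of_nonneg_right (mul_rpow_le_integral_rpow ha hn (by linarith))
          (hnonneg _ (by positivity))
    _ = (a + 1) * ∫ x in (n : ℝ)..n + 1, x ^ a * w (n + 1) := by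
        rw [intervalIntegral.integral_mul_const, mul_assoc]
    _ ≤ (a + 1) * ∫ x in (n : ℝ)..n + 1, x ^ a * w x := by
        refine mul_le_mul_of_nonneg_left ?_ (by positivity)
        refine intervalIntegral.integral_mono_on_of_le_Ioo (by linarith)
          ((intervalIntegral.intervalIntegrable_rpow (Or.inl ha)).mul_const _) hcell fun x hx => ?_
        have hx0 : 0 < x := hn.trans_lt hx.1
        exact mul_le_mul_of_nonneg_left
          (hanti hx0 (mem_Ioi.2 (by positivity)) hx.2.le) (rpow_nonneg hx0.le a)

lemma integral_cell_le_rpow_mul (ha : 0 ≤ a) (hanti : AntitoneOn w (Ioi 0))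
    (hnonneg : ∀ x > 0, 0 ≤ w x) (hint : IntegrableOn (fun x => x ^ a * w x) (Ioi 0))
    {n : ℕ} (hn : 1 ≤ n) :
    ∫ x in (n : ℝ)..n + 1, x ^ a * w x ≤ 2 ^ a * ((n : ℝ) ^ a * w n) := by
  have hn1 : (1 : ℝ) ≤ n := by exact_mod_cast hn
  have hn0 : (0 : ℝ) < n := by linarith
  have hcell := intervalIntegrable_of_integrableOn_Ioi hint hn0.le
    (le_add_of_nonneg_right zero_le_one)
  calc ∫ x in (n : ℝ)..n + 1, x ^ a * w x
      ≤ ∫ _ in (n : ℝ)..n + 1, (2 * n : ℝ) ^ a * w n := by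
        refine intervalIntegral.integral_mono_on_of_le_Ioo (by linarith) hcell (by simp)
          fun x hx => ?_
        have hx0 : 0 < x := hn0.trans hx.1
        exact mul_le_mul (rpow_le_rpow hx0.le (by linarith [hx.2]) ha) (hanti hn0 hx0 hx.1.le)
          (hnonneg x hx0) (by positivity)
    _ = 2 ^ a * ((n : ℝ) ^ a * w n) := by
        rw [intervalIntegral.integral_const, mul_rpow zero_le_two hn0.le, smul_eq_mul]
        ring

lemma integral_zero_one_rpow_mul_le (ha : 0 ≤ a) (hC : 0 ≤ C) (hbound : ∀ x ∈ Ioo 0 1, w x ≤ C)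
    (hint : IntervalIntegrable (fun x => x ^ a * w x) volume 0 1) :
    ∫ x in (0 : ℝ)..1, x ^ a * w x ≤ C := by
  calc ∫ x in (0 : ℝ)..1, x ^ a * w x ≤ ∫ _ in (0 : ℝ)..1, C := by
        refine intervalIntegral.integral_mono_on_of_le_Ioo zero_le_one hint (by simp)
          fun x hx => ?_
        calc x ^ a * w x ≤ x ^ a * C :=
              mul_le_mul_of_nonneg_left (hbound x hx) (rpow_nonneg hx.1.le a)
          _ ≤ C := mul_le_of_le_one_left hC (rpow_le_one hx.1.le hx.2.le ha)
    _ = C := by simp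

lemma summable_rpow_mul (ha : 0 ≤ a) (hanti : AntitoneOn w (Ioi 0))
    (hnonneg : ∀ x > 0, 0 ≤ w x) (hint : IntegrableOn (fun x => x ^ a * w x) (Ioi 0)) :
    Summable fun n : ℕ => (n : ℝ) ^ a * w n := by
  rw [← summable_nat_add_iff 1]
  push_cast
  exact .of_nonneg_of_le
    (fun n => mul_nonneg (by positivity) (hnonneg _ (by positivity)))
    (rpow_mul_le_integral_cell ha hanti hnonneg hint)
    ((hasSum_intervalIntegral_nat hint).summable.mul_left _)

lemma tsum_rpow_mul_le_integral (ha : 0 < a) (hanti : AntitoneOn w (Ioi 0))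
    (hnonneg : ∀ x > 0, 0 ≤ w x) (hint : IntegrableOn (fun x => x ^ a * w x) (Ioi 0)) :
    ∑' n : ℕ, (n : ℝ) ^ a * w n ≤ (a + 1) * ∫ x in Ioi 0, x ^ a * w x := by
  have hsum := summable_rpow_mul ha.le hanti hnonneg hint
  have hcells := hasSum_intervalIntegral_nat hint
  have htail := (summable_nat_add_iff 1).2 hsum
  rw [hsum.tsum_eq_zero_add, Nat.cast_zero, zero_rpow ha.ne', zero_mul, zero_add,
    ← hcells.tsum_eq, ← tsum_mul_left]
  push_cast at htail ⊢
  exact htail.tsum_le_tsum (rpow_mul_le_integral_cell ha.le hanti hnonneg hint)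
    (hcells.summable.mul_left _)

lemma integral_le_add_tsum_rpow_mul (ha : 0 < a) (hanti : AntitoneOn w (Ioi 0))
    (hnonneg : ∀ x > 0, 0 ≤ w x) (hbound : ∀ x > 0, w x ≤ C)
    (hint : IntegrableOn (fun x => x ^ a * w x) (Ioi 0)) :
    ∫ x in Ioi 0, x ^ a * w x ≤ C + 2 ^ a * ∑' n : ℕ, (n : ℝ) ^ a * w n := by
  have hC : 0 ≤ C := (hnonneg 1 one_pos).trans (hbound 1 one_pos)
  have hsum := summable_rpow_mul ha.le hanti hnonneg hint
  have hcells := hasSum_intervalIntegral_nat hint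
  rw [hsum.tsum_eq_zero_add, Nat.cast_zero, zero_rpow ha.ne', zero_mul, zero_add,
    ← hcells.tsum_eq, ← tsum_mul_left, hcells.summable.tsum_eq_zero_add, Nat.cast_zero, zero_add]
  have hfirst := integral_zero_one_rpow_mul_le ha.le hC (fun x hx => hbound x hx.1)
    (intervalIntegrable_of_integrableOn_Ioi hint le_rfl zero_le_one)
  exact add_le_add hfirst <|
    ((summable_nat_add_iff 1).2 hcells.summable).tsum_le_tsum
      (fun n => integral_cell_le_rpow_mul ha.le hanti hnonneg hint n.succ_pos)
      (((summable_nat_add_iff 1).2 hsum).mul_left _)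

end WeightedIntegralTest

section FermiEnergy

/-- The mean energy `∑ mᵢ / (e^{mᵢ r - ρ} + 1)` of a free Fermi gas with energy levels `mᵢ` at
inverse temperature `r`. The occupation number `1 / (e^{mᵢ r - ρ} + 1)` is written as a sigmoid. -/
noncomputable def fermiEnergy {ι : Type*} (m : ι → ℝ) (ρ r : ℝ) : ℝ :=
  ∑' i, m i * sigmoid (ρ - m i * r)

lemma sigmoid_sub_eq (x y : ℝ) : sigmoid (x - y) = (exp (y - x) + 1)⁻¹ := by
  rw [sigmoid_def, neg_sub, add_comm]

lemma antitone_mul_sigmoid_sub_mul {x : ℝ} (hx : 0 ≤ x) (ρ : ℝ) :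
    Antitone fun r => x * sigmoid (ρ - x * r) := fun r s hrs =>
  mul_le_mul_of_nonneg_left (sigmoid_le (by gcongr)) hx

lemma strictAnti_mul_sigmoid_sub_mul {x : ℝ} (hx : 0 < x) (ρ : ℝ) :
    StrictAnti fun r => x * sigmoid (ρ - x * r) := fun r s hrs =>
  mul_lt_mul_of_pos_left (sigmoid_lt (by gcongr)) hx

variable {ι : Type*} {m : ι → ℝ} {ρ : ℝ}

lemma fermiEnergy_strictAntiOn (hm : ∀ i, 0 ≤ m i) (hpos : ∃ i, 0 < m i)
    (hsum : ∀ r > 0, Summable fun i => m i * sigmoid (ρ - m i * r)) :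
    StrictAntiOn (fermiEnergy m ρ) (Ioi 0) := by
  intro r hr s hs hrs
  obtain ⟨i, hi⟩ := hpos
  exact (hsum s hs).tsum_lt_tsum (fun j => antitone_mul_sigmoid_sub_mul (hm j) ρ hrs.le)
    (strictAnti_mul_sigmoid_sub_mul hi ρ hrs) (hsum r hr)

lemma fermiEnergy_continuousOn (hm : ∀ i, 0 ≤ m i)
    (hsum : ∀ r > 0, Summable fun i => m i * sigmoid (ρ - m i * r)) :
    ContinuousOn (fermiEnergy m ρ) (Ioi 0) := by
  intro r hr
  have hhalf : 0 < r / 2 := half_pos hr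
  have hcont : ContinuousOn (fermiEnergy m ρ) (Ici (r / 2)) := by
    refine continuousOn_tsum (fun i => ?_) (hsum _ hhalf) fun i s hs => ?_
    · exact (continuous_const.mul (continuous_sigmoid.comp (by fun_prop))).continuousOn
    · rw [norm_of_nonneg (mul_nonneg (hm i) (sigmoid_nonneg _))]
      exact antitone_mul_sigmoid_sub_mul (hm i) ρ hs
  exact (hcont.continuousAt (Ici_mem_nhds (half_lt_self hr))).continuousWithinAt

end FermiEnergy

section FermiIntegral

/-- The continuum analogue of `fermiEnergy` for the energy levels `n ^ α`: the sum over `n` is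
replaced by an integral. -/
noncomputable def fermiIntegral (α ρ r : ℝ) : ℝ :=
  ∫ x in Ioi 0, x ^ α * sigmoid (ρ - x ^ α * r)

variable {α ρ r : ℝ}

lemma sigmoid_le_exp (x : ℝ) : sigmoid x ≤ exp x := by
  rw [sigmoid_def, ← inv_inv (exp x), ← exp_neg]
  gcongr
  linarith

lemma integrableOn_rpow_mul_sigmoid (hα : 0 < α) (hr : 0 < r) :
    IntegrableOn (fun x => x ^ α * sigmoid (ρ - x ^ α * r)) (Ioi 0) := by
  have hdom := (integrableOn_rpow_mul_exp_neg_mul_rpow (s := α) (by linarith) hα hr).const_mul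
    (exp ρ)
  have hcont : Continuous fun x : ℝ => x ^ α * sigmoid (ρ - x ^ α * r) :=
    (continuous_rpow_const hα.le).mul <|
      continuous_sigmoid.comp (continuous_const.sub ((continuous_rpow_const hα.le).mul_const r))
  refine hdom.mono' hcont.aestronglyMeasurable <|
    ae_restrict_of_forall_mem measurableSet_Ioi fun x hx => ?_
  have hx0 : 0 ≤ x ^ α := rpow_nonneg (le_of_lt hx) α
  rw [norm_of_nonneg (mul_nonneg hx0 (sigmoid_nonneg _))]
  calc x ^ α * sigmoid (ρ - x ^ α * r) ≤ x ^ α * exp (ρ - x ^ α * r) :=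
        mul_le_mul_of_nonneg_left (sigmoid_le_exp _) hx0
    _ = exp ρ * (x ^ α * exp (-r * x ^ α)) := by
        rw [sub_eq_add_neg, exp_add, neg_mul, mul_comm r]
        ring

lemma fermiIntegral_pos (hα : 0 < α) (hr : 0 < r) : 0 < fermiIntegral α ρ r := by
  have hpos : ∀ x ∈ Ioi (0 : ℝ), 0 < x ^ α * sigmoid (ρ - x ^ α * r) := fun x hx =>
    mul_pos (rpow_pos_of_pos hx α) (sigmoid_pos _)
  have hsupp : Ioi (0 : ℝ) ⊆ Function.support fun x => x ^ α * sigmoid (ρ - x ^ α * r) :=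
    fun x hx => (hpos x hx).ne'
  rw [fermiIntegral, setIntegral_pos_iff_support_of_nonneg_ae
    (ae_restrict_of_forall_mem measurableSet_Ioi fun x hx => (hpos x hx).le)
    (integrableOn_rpow_mul_sigmoid hα hr), inter_eq_self_of_subset_right hsupp]
  simp

lemma integral_rpow_mul_sigmoid_sub {s : ℝ} (hs : -1 < s) :
    ∫ t in Ioi 0, t ^ s * sigmoid (ρ - t) = Gamma (s + 1) * -negLi (s + 1) (exp ρ) := by
  have hΓ : Gamma (s + 1) ≠ 0 := (Gamma_pos_of_pos (by linarith)).ne'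
  simp only [negLi, add_sub_cancel_right, sigmoid_sub_eq, exp_sub, ← div_eq_mul_inv]
  rw [neg_mul, neg_neg, ← mul_assoc, mul_one_div_cancel hΓ, one_mul]

lemma integral_rpow_mul_sigmoid_sub_mul {s : ℝ} (hr : 0 < r) :
    ∫ t in Ioi 0, t ^ s * sigmoid (ρ - t * r) =
      (∫ t in Ioi 0, t ^ s * sigmoid (ρ - t)) * r ^ (-(s + 1)) := by
  have hscale := integral_comp_mul_right_Ioi (fun t => t ^ s * sigmoid (ρ - t)) 0 hr
  have hpull : ∫ t in Ioi 0, (t * r) ^ s * sigmoid (ρ - t * r) =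
      r ^ s * ∫ t in Ioi 0, t ^ s * sigmoid (ρ - t * r) := by
    rw [← integral_const_mul]
    refine setIntegral_congr_fun measurableSet_Ioi fun t ht => ?_
    simp only [mul_rpow (le_of_lt ht) hr.le]
    ring
  rw [hpull, zero_mul, smul_eq_mul] at hscale
  rw [rpow_neg hr.le, rpow_add_one hr.ne', mul_inv, ← mul_right_inj' (rpow_pos_of_pos hr s).ne',
    hscale]
  field_simp

lemma fermiIntegral_eq (hα : 0 < α) (hr : 0 < r) :
    fermiIntegral α ρ r =
      α⁻¹ * Gamma (α⁻¹ + 1) * -negLi (α⁻¹ + 1) (exp ρ) * r ^ (-(α⁻¹ + 1)) := by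
  have hβ : 0 < α⁻¹ := inv_pos.2 hα
  have hsubst : ∀ t ∈ Ioi (0 : ℝ),
      (α⁻¹ * t ^ (α⁻¹ - 1)) • ((t ^ α⁻¹) ^ α * sigmoid (ρ - (t ^ α⁻¹) ^ α * r)) =
        α⁻¹ * (t ^ α⁻¹ * sigmoid (ρ - t * r)) := fun t ht => by
    have ht0 : 0 < t := ht
    rw [rpow_inv_rpow ht0.le hα.ne', rpow_sub_one ht0.ne', smul_eq_mul]
    field_simp
  rw [fermiIntegral, ← integral_comp_rpow_Ioi_of_pos hβ,
    setIntegral_congr_fun measurableSet_Ioi hsubst, integral_const_mul,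
    integral_rpow_mul_sigmoid_sub_mul hr, integral_rpow_mul_sigmoid_sub (by linarith)]
  ring

lemma fermiIntegral_eq_mul_rpow (hα : 0 < α) (hr : 0 < r) :
    fermiIntegral α ρ r = fermiIntegral α ρ 1 * r ^ (-(α⁻¹ + 1)) := by
  rw [fermiIntegral_eq hα hr, fermiIntegral_eq hα one_pos, one_rpow, mul_one]

lemma fermiIntegral_half (hα : 0 < α) (hr : 0 < r) :
    fermiIntegral α ρ (r / 2) = 2 ^ (α⁻¹ + 1) * fermiIntegral α ρ r := by
  rw [fermiIntegral_eq_mul_rpow hα (half_pos hr), fermiIntegral_eq_mul_rpow hα hr,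
    div_rpow hr.le zero_le_two, rpow_neg zero_le_two, div_inv_eq_mul]
  ring

lemma tendsto_fermiIntegral_atTop (hα : 0 < α) : Tendsto (fermiIntegral α ρ) atTop (𝓝 0) := by
  have hlim := (tendsto_rpow_neg_atTop (y := α⁻¹ + 1) (by positivity)).const_mul
    (fermiIntegral α ρ 1)
  rw [mul_zero] at hlim
  refine hlim.congr' ?_
  filter_upwards [Ioi_mem_atTop 0] with r hr using (fermiIntegral_eq_mul_rpow hα hr).symm

lemma tendsto_fermiIntegral_nhdsGT_zero (hα : 0 < α) :
    Tendsto (fermiIntegral α ρ) (𝓝[>] 0) atTop := by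
  have hexp : -(α⁻¹ + 1) < 0 := neg_neg_of_pos (by positivity)
  refine ((tendsto_rpow_neg_nhdsGT_zero hexp).const_mul_atTop
    (fermiIntegral_pos (ρ := ρ) hα one_pos)).congr' ?_
  filter_upwards [self_mem_nhdsWithin] with r hr using (fermiIntegral_eq_mul_rpow hα hr).symm

end FermiIntegral

section PowerLevels

variable {α ρ r : ℝ}

lemma antitoneOn_sigmoid_sub_rpow_mul (hα : 0 ≤ α) (hr : 0 ≤ r) :
    AntitoneOn (fun x => sigmoid (ρ - x ^ α * r)) (Ioi 0) := fun _ hx _ _ hxy =>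
  sigmoid_le (sub_le_sub_left (mul_le_mul_of_nonneg_right
    (rpow_le_rpow (le_of_lt hx) hxy hα) hr) ρ)

lemma summable_rpow_mul_sigmoid (hα : 0 < α) (hr : 0 < r) :
    Summable fun n : ℕ => (n : ℝ) ^ α * sigmoid (ρ - (n : ℝ) ^ α * r) :=
  summable_rpow_mul (w := fun x => sigmoid (ρ - x ^ α * r)) hα.le
    (antitoneOn_sigmoid_sub_rpow_mul hα.le hr.le)
    (fun _ _ => sigmoid_nonneg _) (integrableOn_rpow_mul_sigmoid hα hr)

lemma fermiEnergy_rpow_le (hα : 0 < α) (hr : 0 < r) :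
    fermiEnergy (fun n : ℕ => (n : ℝ) ^ α) ρ r ≤ (α + 1) * fermiIntegral α ρ r :=
  tsum_rpow_mul_le_integral (w := fun x => sigmoid (ρ - x ^ α * r)) hα
    (antitoneOn_sigmoid_sub_rpow_mul hα.le hr.le)
    (fun _ _ => sigmoid_nonneg _) (integrableOn_rpow_mul_sigmoid hα hr)

lemma fermiIntegral_le_fermiEnergy_rpow (hα : 0 < α) (hr : 0 < r) :
    fermiIntegral α ρ r ≤ 1 + 2 ^ α * fermiEnergy (fun n : ℕ => (n : ℝ) ^ α) ρ r :=
  integral_le_add_tsum_rpow_mul (w := fun x => sigmoid (ρ - x ^ α * r)) hα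
    (antitoneOn_sigmoid_sub_rpow_mul hα.le hr.le)
    (fun _ _ => sigmoid_nonneg _) (fun _ _ => sigmoid_le_one _)
    (integrableOn_rpow_mul_sigmoid hα hr)

end PowerLevels

section FloorLevels

/-- The energy levels `⌊n ^ α⌋` of the problem, listed with multiplicity: the level `k ≥ 1` occurs
`g α k` times. The spurious index `n = 0` only adds a level `0`, which carries no energy. -/
noncomputable def floorPow (α : ℝ) (n : ℕ) : ℕ := ⌊(n : ℝ) ^ α⌋₊

variable {α ρ r : ℝ}

lemma floorPow_zero (hα : α ≠ 0) : floorPow α 0 = 0 := by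
  simp [floorPow, zero_rpow hα]

lemma floor_mul_sigmoid_le {x : ℝ} (hx : 0 ≤ x) (hr : 0 ≤ r) :
    (⌊x⌋₊ : ℝ) * sigmoid (ρ - ⌊x⌋₊ * r) ≤ x * sigmoid (ρ - x * (r / 2)) := by
  rcases lt_or_ge x 1 with hx1 | hx1
  · rw [Nat.floor_eq_zero.2 hx1, Nat.cast_zero, zero_mul]
    exact mul_nonneg hx (sigmoid_nonneg _)
  · have hexp : x * (r / 2) ≤ ⌊x⌋₊ * r := by
      have := mul_le_mul_of_nonneg_right (Nat.div_two_lt_floor hx1).le hr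
      linarith
    exact mul_le_mul (Nat.floor_le hx) (sigmoid_le (by linarith)) (sigmoid_nonneg _) hx

lemma mul_sigmoid_le_two_mul_floor {x : ℝ} (hx : 1 ≤ x) (hr : 0 ≤ r) :
    x * sigmoid (ρ - x * r) ≤ 2 * (⌊x⌋₊ * sigmoid (ρ - ⌊x⌋₊ * r)) := by
  rw [← mul_assoc]
  have hfloor : (⌊x⌋₊ : ℝ) ≤ x := Nat.floor_le (zero_le_one.trans hx)
  exact mul_le_mul (by linarith [Nat.div_two_lt_floor hx]) (sigmoid_le (by gcongr))
    (sigmoid_nonneg _) (by positivity)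

lemma summable_floorPow_mul_sigmoid (hα : 0 < α) (hr : 0 < r) :
    Summable fun n : ℕ => (floorPow α n : ℝ) * sigmoid (ρ - floorPow α n * r) :=
  .of_nonneg_of_le (fun _ => mul_nonneg (Nat.cast_nonneg _) (sigmoid_nonneg _))
    (fun _ => floor_mul_sigmoid_le (by positivity) hr.le)
    (summable_rpow_mul_sigmoid hα (half_pos hr))

lemma fermiEnergy_floorPow_le (hα : 0 < α) (hr : 0 < r) :
    fermiEnergy (fun n => floorPow α n) ρ r ≤
      (α + 1) * 2 ^ (α⁻¹ + 1) * fermiIntegral α ρ r :=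
  calc fermiEnergy (fun n => floorPow α n) ρ r
      ≤ fermiEnergy (fun n : ℕ => (n : ℝ) ^ α) ρ (r / 2) :=
        (summable_floorPow_mul_sigmoid hα hr).tsum_le_tsum
          (fun _ => floor_mul_sigmoid_le (by positivity) hr.le)
          (summable_rpow_mul_sigmoid hα (half_pos hr))
    _ ≤ (α + 1) * fermiIntegral α ρ (r / 2) := fermiEnergy_rpow_le hα (half_pos hr)
    _ = (α + 1) * 2 ^ (α⁻¹ + 1) * fermiIntegral α ρ r := by
        rw [fermiIntegral_half hα hr, mul_assoc]

lemma fermiIntegral_le_fermiEnergy_floorPow (hα : 0 < α) (hr : 0 < r) :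
    fermiIntegral α ρ r ≤
      1 + 2 ^ (α + 1) * fermiEnergy (fun n => floorPow α n) ρ r := by
  have hterm (n : ℕ) : (n : ℝ) ^ α * sigmoid (ρ - (n : ℝ) ^ α * r) ≤
      2 * (floorPow α n * sigmoid (ρ - floorPow α n * r)) := by
    rcases n.eq_zero_or_pos with rfl | hn
    · simp [zero_rpow hα.ne', floorPow_zero hα.ne']
    · exact mul_sigmoid_le_two_mul_floor (one_le_rpow (by exact_mod_cast hn) hα.le) hr.le
  have hsum : fermiEnergy (fun n : ℕ => (n : ℝ) ^ α) ρ r ≤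
      2 * fermiEnergy (fun n => floorPow α n) ρ r := by
    rw [fermiEnergy, fermiEnergy, ← tsum_mul_left]
    exact (summable_rpow_mul_sigmoid hα hr).tsum_le_tsum hterm
      ((summable_floorPow_mul_sigmoid hα hr).mul_left 2)
  calc fermiIntegral α ρ r
      ≤ 1 + 2 ^ α * fermiEnergy (fun n : ℕ => (n : ℝ) ^ α) ρ r :=
        fermiIntegral_le_fermiEnergy_rpow hα hr
    _ ≤ 1 + 2 ^ α * (2 * fermiEnergy (fun n => floorPow α n) ρ r) := by gcongr
    _ = 1 + 2 ^ (α + 1) * fermiEnergy (fun n => floorPow α n) ρ r := by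
        rw [rpow_add_one two_ne_zero, mul_assoc]

lemma tendsto_fermiEnergy_floorPow_atTop (hα : 0 < α) :
    Tendsto (fermiEnergy (fun n => floorPow α n) ρ) atTop (𝓝 0) := by
  have hlim := (tendsto_fermiIntegral_atTop (ρ := ρ) hα).const_mul ((α + 1) * 2 ^ (α⁻¹ + 1))
  rw [mul_zero] at hlim
  refine squeeze_zero' (.of_forall fun r => tsum_nonneg fun n =>
    mul_nonneg (Nat.cast_nonneg _) (sigmoid_nonneg _)) ?_ hlim
  filter_upwards [Ioi_mem_atTop 0] with r hr using fermiEnergy_floorPow_le hα hr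

lemma tendsto_fermiEnergy_floorPow_nhdsGT_zero (hα : 0 < α) :
    Tendsto (fermiEnergy (fun n => floorPow α n) ρ) (𝓝[>] 0) atTop := by
  have hpow : (0 : ℝ) < 2 ^ (α + 1) := by positivity
  refine Tendsto.atTop_of_const_mul₀ hpow <| Tendsto.atTop_of_const_add 1 <|
    tendsto_atTop_mono' _ ?_ (tendsto_fermiIntegral_nhdsGT_zero (ρ := ρ) hα)
  filter_upwards [self_mem_nhdsWithin] with r hr using fermiIntegral_le_fermiEnergy_floorPow hα hr

lemma existsUnique_fermiEnergy_floorPow_eq (hα : 0 < α) (ρ : ℝ) {y : ℝ} (hy : 0 < y) :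
    ∃! r, 0 < r ∧ y = fermiEnergy (fun n => floorPow α n) ρ r := by
  have hsum : ∀ r > 0, Summable fun n : ℕ =>
      (floorPow α n : ℝ) * sigmoid (ρ - floorPow α n * r) := fun r hr =>
    summable_floorPow_mul_sigmoid hα hr
  exact existsUnique_pos_eq_of_strictAntiOn
    (fermiEnergy_strictAntiOn (fun _ => Nat.cast_nonneg _) ⟨1, by simp [floorPow]⟩ hsum)
    (fermiEnergy_continuousOn (fun _ => Nat.cast_nonneg _) hsum)
    (tendsto_fermiEnergy_floorPow_atTop hα) (tendsto_fermiEnergy_floorPow_nhdsGT_zero hα) hy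

end FloorLevels

section Multiplicities

variable {α : ℝ}

lemma g_eq_card_fiber (hα : α ≠ 0) {k : ℕ} (hk : k ≠ 0) :
    g α k = Nat.card (floorPow α ⁻¹' {k}) := by
  rw [Nat.card_coe_set_eq, g]
  congr 1
  ext n
  have hfloor : ⌊(n : ℝ) ^ α⌋ = (k : ℤ) ↔ floorPow α n = k := by
    rw [floorPow, ← Int.natCast_floor_eq_floor (by positivity), Nat.cast_inj]
  simp only [Set.mem_ofPred_eq, mem_preimage, mem_singleton_iff, hfloor, and_iff_right_iff_imp]
  rintro rfl
  refine Nat.one_le_iff_ne_zero.2 ?_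
  rintro rfl
  exact hk (floorPow_zero hα)

lemma tsum_g_mul {F : ℕ → ℝ} (hα : α ≠ 0) (hF : F 0 = 0)
    (hsum : Summable fun n : ℕ => F (floorPow α n)) :
    ∑' k, g α k * F k = ∑' n : ℕ, F (floorPow α n) := by
  rw [← (hsum.hasSum.tsum_fiberwise (floorPow α)).tsum_eq]
  refine tsum_congr fun k => ?_
  have hfiber : ∀ n : floorPow α ⁻¹' {k}, F (floorPow α n) = F k :=
    fun n => congrArg F n.2
  rw [tsum_congr hfiber, tsum_const, nsmul_eq_mul]
  rcases eq_or_ne k 0 with rfl | hk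
  · rw [hF, mul_zero, mul_zero]
  · rw [g_eq_card_fiber hα hk]

lemma tsum_mul_g_div_eq_fermiEnergy (hα : 0 < α) {r : ℝ} (hr : 0 < r) (ρ : ℝ) :
    ∑' k : ℕ, (k : ℝ) * g α k / (exp (k * r - ρ) + 1) =
      fermiEnergy (fun n => floorPow α n) ρ r := by
  rw [fermiEnergy, ← tsum_g_mul (F := fun k => k * sigmoid (ρ - k * r)) hα.ne' (by simp)
    (summable_floorPow_mul_sigmoid hα hr)]
  refine tsum_congr fun k => ?_
  rw [sigmoid_sub_eq]
  ring

end Multiplicities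

theorem unique_r_general (α β : ℝ) (hα : 0 < α) (hβ : β = 1 / α) :
    (∀ y : ℝ, 0 < y → ∀ ρ : ℝ, ∃! r : ℝ, 0 < r ∧
      y = ∑' k : ℕ, (k : ℝ) * g α k / (exp (k * r - ρ) + 1)) ∧
    ∃ γ₁ > (0 : ℝ), ∃ γ₂ > (0 : ℝ), ∀ y : ℝ, 1 ≤ y → ∀ ρ r : ℝ, 0 < r →
      y = ∑' k : ℕ, (k : ℝ) * g α k / (exp (k * r - ρ) + 1) →
      γ₁ * (-negLi (β + 1) (exp ρ)) * r ^ (-(β + 1)) ≤ y ∧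
      y ≤ γ₂ * (-negLi (β + 1) (exp ρ)) * r ^ (-(β + 1)) := by
  obtain rfl : β = α⁻¹ := hβ.trans (one_div α)
  refine ⟨fun y hy ρ => ?_, α⁻¹ * Gamma (α⁻¹ + 1) / (1 + 2 ^ (α + 1)), by positivity,
    (α + 1) * 2 ^ (α⁻¹ + 1) * (α⁻¹ * Gamma (α⁻¹ + 1)), by positivity, ?_⟩
  · refine (existsUnique_congr fun r => and_congr_right fun hr => ?_).1
      (existsUnique_fermiEnergy_floorPow_eq hα ρ hy)
    rw [tsum_mul_g_div_eq_fermiEnergy hα hr]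
  · intro y hy ρ r hr hyr
    rw [tsum_mul_g_div_eq_fermiEnergy hα hr] at hyr
    have hlower := fermiIntegral_le_fermiEnergy_floorPow (ρ := ρ) hα hr
    have hupper := fermiEnergy_floorPow_le (ρ := ρ) hα hr
    rw [← hyr, fermiIntegral_eq hα hr] at hlower hupper
    refine ⟨?_, hupper.trans_eq (by ring)⟩
    rw [div_mul_eq_mul_div, div_mul_eq_mul_div, div_le_iff₀ (by positivity)]
    linarith

/-- Lemma (unique saddle point in `r`): for every `n ≥ 1` and fixed `ρ` there is a unique
`r > 0` with `n = ∑_{k≥1} k g(k)/(e^{kr−ρ}+1)`; moreover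
`n ≍ (−Li_{β+1}(−e^ρ)) r^{−(β+1)}` with constants depending only on `β`. -/
theorem unique_r (α β : ℝ) (hα : 0 < α ∧ α < 1) (hβ : β = 1 / α) :
    (∀ n : ℕ, 1 ≤ n → ∀ ρ : ℝ, ∃! r : ℝ, 0 < r ∧
      (n : ℝ) = ∑' k : ℕ, (k : ℝ) * g α k / (Real.exp (k * r - ρ) + 1)) ∧
    ∃ γ₁ > (0:ℝ), ∃ γ₂ > (0:ℝ), ∀ n : ℕ, 1 ≤ n → ∀ ρ r : ℝ, 0 < r →
      (n : ℝ) = (∑' k : ℕ, (k : ℝ) * g α k / (Real.exp (k * r - ρ) + 1)) →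
      γ₁ * (-negLi (β + 1) (Real.exp ρ)) * r ^ (-(β + 1)) ≤ (n : ℝ) ∧
      (n : ℝ) ≤ γ₂ * (-negLi (β + 1) (Real.exp ρ)) * r ^ (-(β + 1)) := by
  obtain ⟨hex, γ₁, h₁, γ₂, h₂, hbounds⟩ := unique_r_general α β hα.1 hβ
  exact ⟨fun n hn => hex n (by exact_mod_cast hn), γ₁, h₁, γ₂, h₂,
    fun n hn => hbounds n (by exact_mod_cast hn)⟩
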